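/- If V is a Whittaker module over R(f) with cyclic Whittaker vector w, then the endomorphism ring End_{R(f)}(V) is isomorphic to Z(R)/Z_V, where Z_V is the annihilator of V in the center Z(R); in particular End_{R(f)}(V) is commutative. -/

import Mathlib

/-!
The algebra `R(f)` contains a central element `Ω = FE + g(H)`, where `g` is an antidifference of
`f`: `g(X) - g(X - 1) = f(X)`.  Write `Z` for the center.  In a Whittaker module `V = R w` the
relation `c F w = F E w = (Ω - g(H)) w` shows that `V` is spanned over `Z` by the vectors `H^j w`,
or equally by the vectors `b_j = binom(-H, j) w`.  These vectors are chosen so that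
the `Z`-linear operator `N = c⁻¹E - 1` acts as a downward shift, `N b_{j+1} = b_j` and
`N b_0 = 0`, because `E p(H) = p(H - 1) E` for every polynomial `p`.

The vectors `b_j` need not be independent over `Z`, but the shift forces every relation
`∑ p_j b_j = 0` to be trivial in the sense that each `p_j` annihilates `w`, hence all of `V`
(`coeff_smul_eq_zero_of_shift`).  Consequently a vector killed by `N`, that is, a Whittaker vector,
lies in `Z w` (`exists_smul_of_shift_eq_zero`).  An endomorphism `α` sends `w` to a Whittaker
vector, so `α w = z w` for some central `z`, and `α` is the action of `z` since `w` generates `V`.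
-/

open Polynomial

inductive SmithGen : Type
  | E | F | H

open SmithGen in
inductive SmithRel (f : ℂ[X]) : FreeAlgebra ℂ SmithGen → FreeAlgebra ℂ SmithGen → Prop
  | ef : SmithRel f (FreeAlgebra.ι ℂ E * FreeAlgebra.ι ℂ F - FreeAlgebra.ι ℂ F * FreeAlgebra.ι ℂ E)
      (aeval (FreeAlgebra.ι ℂ H) f)
  | he : SmithRel f (FreeAlgebra.ι ℂ H * FreeAlgebra.ι ℂ E - FreeAlgebra.ι ℂ E * FreeAlgebra.ι ℂ H)
      (FreeAlgebra.ι ℂ E)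
  | hf : SmithRel f (FreeAlgebra.ι ℂ H * FreeAlgebra.ι ℂ F - FreeAlgebra.ι ℂ F * FreeAlgebra.ι ℂ H)
      (-FreeAlgebra.ι ℂ F)

/-- Smith's algebra `R(f)`, similar to `U(sl₂)`. -/
abbrev SmithAlgebra (f : ℂ[X]) : Type := RingQuot (SmithRel f)

noncomputable def SmithE (f : ℂ[X]) : SmithAlgebra f :=
  RingQuot.mkAlgHom ℂ (SmithRel f) (FreeAlgebra.ι ℂ SmithGen.E)

noncomputable def SmithF (f : ℂ[X]) : SmithAlgebra f :=
  RingQuot.mkAlgHom ℂ (SmithRel f) (FreeAlgebra.ι ℂ SmithGen.F)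

noncomputable def SmithH (f : ℂ[X]) : SmithAlgebra f :=
  RingQuot.mkAlgHom ℂ (SmithRel f) (FreeAlgebra.ι ℂ SmithGen.H)

/-- The Casimir element `Ω = 2FE + u(H+1)`. -/
noncomputable def SmithOmega (f u : ℂ[X]) : SmithAlgebra f :=
  2 * SmithF f * SmithE f + aeval (SmithH f) (u.comp (X + 1))

/-- The action of the center `Z(R)` on an `R(f)`-module `V`, as a ring homomorphism
`Z(R) → End_{R(f)}(V)`. -/
noncomputable def smithCentralAction (f : ℂ[X]) (V : Type) [AddCommGroup V]
    [Module (SmithAlgebra f) V] :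
    Subalgebra.center ℂ (SmithAlgebra f) →+* Module.End (SmithAlgebra f) V where
  toFun z :=
    { toFun := fun v => (z : SmithAlgebra f) • v
      map_add' := fun v₁ v₂ => smul_add _ _ _
      map_smul' := fun r v => by
        simp only [RingHom.id_apply]
        rw [smul_smul, smul_smul, Subalgebra.mem_center_iff.mp z.2 r] }
  map_one' := by ext v; exact one_smul _ _
  map_mul' z₁ z₂ := by ext v; exact mul_smul _ _ _
  map_zero' := by ext v; exact zero_smul _ _
  map_add' z₁ z₂ := by ext v; exact add_smul _ _ _

/-! ### Antidifferences of polynomials -/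

/-- Every complex polynomial has an antidifference; on monomials it is a multiple of a Bernoulli
polynomial. -/
lemma exists_antidifference (f : ℂ[X]) : ∃ g : ℂ[X], g - g.comp (X - 1) = f := by
  -- It is enough to solve the forward equation `g(X + 1) - g(X) = f(X)`, up to translation.
  suffices h : ∀ f : ℂ[X], ∃ g : ℂ[X], g.comp (X + 1) - g = f by
    obtain ⟨g, hg⟩ := h (f.comp (X + 1))
    refine ⟨g, ?_⟩
    have := congrArg (fun p : ℂ[X] => p.comp (X - 1)) hg
    simpa [comp_assoc] using this
  intro f
  induction f using Polynomial.induction_on' with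
  | add p q hp hq =>
    obtain ⟨a, rfl⟩ := hp
    obtain ⟨b, rfl⟩ := hq
    exact ⟨a + b, by simp only [add_comp]; ring⟩
  | monomial n a =>
    have hn : (n + 1 : ℂ) ≠ 0 := Nat.cast_add_one_ne_zero n
    have h := Polynomial.bernoulli_comp_one_add_X (n + 1)
    have h' := congrArg (Polynomial.map (algebraMap ℚ ℂ)) h
    refine ⟨C (a / (n + 1)) * (Polynomial.bernoulli (n + 1)).map (algebraMap ℚ ℂ), ?_⟩
    simp only [Polynomial.map_comp, Polynomial.map_add, Polynomial.map_one, Polynomial.map_X,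
      Nat.add_sub_cancel] at h'
    rw [mul_comp, C_comp, add_comm X, h', mul_add, add_sub_cancel_left, ← C_mul_X_pow_eq_monomial]
    simp only [nsmul_eq_mul, Polynomial.map_mul, Polynomial.map_natCast, Polynomial.map_pow,
      Polynomial.map_X]
    rw [← mul_assoc, ← C_eq_natCast, ← C_mul]
    congr 2
    push_cast
    field_simp

/-! ### Shift operators -/

section Shift

variable {Z V : Type*} [Semiring Z] [AddCommGroup V] [Module Z V]
  {N : V →ₗ[Z] V} {b : ℕ → V}

lemma shift_sum (h0 : N (b 0) = 0) (hs : ∀ j, N (b (j + 1)) = b j) (n : ℕ) (p : ℕ → Z) :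
    N (∑ j ∈ Finset.range (n + 1), p j • b j) = ∑ j ∈ Finset.range n, p (j + 1) • b j := by
  rw [Finset.sum_range_succ', map_add, map_sum]
  simp [h0, hs]

/-- A relation among the `b j` is trivial up to scalars annihilating `V`: applying the shift
reduces its length, and what then remains is the constant term. -/
lemma coeff_smul_eq_zero_of_shift (h0 : N (b 0) = 0) (hs : ∀ j, N (b (j + 1)) = b j)
    (hb : ∀ z : Z, z • b 0 = 0 → ∀ v : V, z • v = 0) (n : ℕ) (p : ℕ → Z)
    (h : ∑ j ∈ Finset.range n, p j • b j = 0) : ∀ j < n, ∀ v : V, p j • v = 0 := by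
  induction n generalizing p with
  | zero => simp
  | succ n ih =>
    have h1 : ∀ j < n, ∀ v : V, p (j + 1) • v = 0 :=
      ih (fun j => p (j + 1)) (by rw [← shift_sum h0 hs, h, map_zero])
    rw [Finset.sum_range_succ', Finset.sum_eq_zero
      (fun j hj => h1 j (Finset.mem_range.mp hj) _), zero_add] at h
    rintro (_ | j) hj
    · exact hb _ h
    · exact h1 j (by omega)

/-- If `N v = 0` for `v = ∑ p_j b_j`, then `∑ p_{j+1} b_j = 0`, so only the term `p_0 b_0` of `v`
survives. -/
lemma exists_smul_of_shift_eq_zero (h0 : N (b 0) = 0) (hs : ∀ j, N (b (j + 1)) = b j)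
    (hb : ∀ z : Z, z • b 0 = 0 → ∀ v : V, z • v = 0) {v : V}
    (hv : v ∈ Submodule.span Z (Set.range b)) (hN : N v = 0) : ∃ z : Z, v = z • b 0 := by
  obtain ⟨p, rfl⟩ := Finsupp.mem_span_range_iff_exists_finsupp.mp hv
  have hsum : (p.sum fun i a => a • b i) =
      ∑ j ∈ Finset.range (p.support.sup id + 1), p j • b j := by
    refine Finsupp.sum_of_support_subset p (fun i hi => ?_) _ (by simp)
    exact Finset.mem_range.mpr (Nat.lt_succ_of_le (Finset.le_sup (f := id) hi))
  rw [hsum] at hN ⊢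
  rw [shift_sum h0 hs] at hN
  have h1 := coeff_smul_eq_zero_of_shift h0 hs hb _ (fun j => p (j + 1)) hN
  exact ⟨p 0, by rw [Finset.sum_range_succ', Finset.sum_eq_zero
      (fun j hj => h1 j (Finset.mem_range.mp hj) _), zero_add]⟩

end Shift

/-! ### Commutation relations and the Casimir element -/

section Relations

variable (f : ℂ[X])

lemma smith_ef : SmithE f * SmithF f = SmithF f * SmithE f + aeval (SmithH f) f := by
  have h := RingQuot.mkAlgHom_rel ℂ (SmithRel.ef (f := f))
  rw [map_sub, map_mul, map_mul, ← aeval_algHom_apply] at h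
  exact sub_eq_iff_eq_add'.mp h

lemma smith_eh : SmithE f * SmithH f = (SmithH f - 1) * SmithE f := by
  have h := RingQuot.mkAlgHom_rel ℂ (SmithRel.he (f := f))
  rw [map_sub, map_mul, map_mul] at h
  change SmithH f * SmithE f - SmithE f * SmithH f = SmithE f at h
  rw [sub_mul, one_mul]
  nth_rewrite 3 [← h]
  abel

lemma smith_fh : SmithF f * SmithH f = (SmithH f + 1) * SmithF f := by
  have h := RingQuot.mkAlgHom_rel ℂ (SmithRel.hf (f := f))
  rw [map_sub, map_mul, map_mul, map_neg] at h
  change SmithH f * SmithF f - SmithF f * SmithH f = - SmithF f at h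
  have h2 : SmithF f = SmithF f * SmithH f - SmithH f * SmithF f := by
    rw [← neg_sub, h, neg_neg]
  rw [add_mul, one_mul]
  nth_rewrite 3 [h2]
  abel

lemma smith_e_aeval (g : ℂ[X]) :
    SmithE f * aeval (SmithH f) g = aeval (SmithH f) (g.comp (X - 1)) * SmithE f := by
  have h : SemiconjBy (SmithE f) (SmithH f) (SmithH f - 1) := smith_eh f
  rw [aeval_comp]
  simp only [map_sub, aeval_X, map_one]
  induction g using Polynomial.induction_on' with
  | add p q hp hq => simp only [map_add, mul_add, add_mul, hp, hq]
  | monomial n a =>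
    simp only [aeval_monomial]
    rw [← mul_assoc, ← Algebra.commutes, mul_assoc, (h.pow_right n).eq, mul_assoc]

lemma smith_aeval_f (g : ℂ[X]) :
    aeval (SmithH f) g * SmithF f = SmithF f * aeval (SmithH f) (g.comp (X - 1)) := by
  have h : SemiconjBy (SmithF f) (SmithH f - 1) (SmithH f) := by
    rw [SemiconjBy, mul_sub, smith_fh]; noncomm_ring
  rw [aeval_comp]
  simp only [map_sub, aeval_X, map_one]
  induction g using Polynomial.induction_on' with
  | add p q hp hq => simp only [map_add, mul_add, add_mul, hp, hq]
  | monomial n a =>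
    simp only [aeval_monomial]
    rw [← mul_assoc, ← Algebra.commutes, mul_assoc, mul_assoc, (h.pow_right n).eq]

variable {f}

/-- `R(f)` is generated as a `ℂ`-algebra by `E`, `F`, `H`. -/
lemma smith_induction {P : SmithAlgebra f → Prop} (hE : P (SmithE f)) (hF : P (SmithF f))
    (hH : P (SmithH f)) (hc : ∀ a : ℂ, P (algebraMap ℂ _ a))
    (hadd : ∀ x y, P x → P y → P (x + y)) (hmul : ∀ x y, P x → P y → P (x * y))
    (r : SmithAlgebra f) : P r := by
  obtain ⟨r, rfl⟩ := RingQuot.mkAlgHom_surjective ℂ (SmithRel f) r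
  induction r using FreeAlgebra.induction with
  | grade0 a => rw [AlgHom.commutes]; exact hc a
  | grade1 x => cases x <;> assumption
  | mul x y hx hy => rw [map_mul]; exact hmul _ _ hx hy
  | add x y hx hy => rw [map_add]; exact hadd _ _ hx hy

/-- The Casimir element `FE + g(H)` is central; it is half of `SmithOmega f u` when
`u(X + 1) = 2g(X)`. -/
lemma smith_casimir_mem_center {g : ℂ[X]} (hg : g - g.comp (X - 1) = f) :
    SmithF f * SmithE f + aeval (SmithH f) g ∈ Subalgebra.center ℂ (SmithAlgebra f) := by
  rw [Subalgebra.mem_center_iff]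
  have hf : aeval (SmithH f) f = aeval (SmithH f) g - aeval (SmithH f) (g.comp (X - 1)) := by
    rw [← map_sub, hg]
  refine smith_induction ?_ ?_ ?_ ?_ ?_ ?_
  · rw [mul_add, smith_e_aeval, ← mul_assoc, smith_ef, hf]
    simp only [add_mul, sub_mul, mul_assoc]
    abel
  · rw [add_mul, smith_aeval_f, mul_assoc, smith_ef, hf]
    simp only [mul_add, mul_sub]
    abel
  · have h1 : SmithF f * SmithE f * SmithH f = SmithH f * (SmithF f * SmithE f) := by
      rw [mul_assoc, smith_eh, ← mul_assoc, mul_sub, smith_fh, mul_one, add_mul, one_mul,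
        add_sub_cancel_right, mul_assoc]
    have h2 : aeval (SmithH f) g * SmithH f = SmithH f * aeval (SmithH f) g := by
      have := congrArg (aeval (SmithH f)) (mul_comm g X)
      simpa only [map_mul, aeval_X] using this
    rw [mul_add, add_mul, h1, h2]
  · exact fun a => Algebra.commutes a _
  · intro x y hx hy
    rw [add_mul, hx, hy, ← mul_add]
  · intro x y hx hy
    rw [mul_assoc, hy, ← mul_assoc, hx, mul_assoc]

end Relations

/-! ### Whittaker vectors -/

section Whittaker

variable {f : ℂ[X]} {V : Type} [AddCommGroup V] [Module (SmithAlgebra f) V]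

lemma center_smul_comm (z : Subalgebra.center ℂ (SmithAlgebra f)) (r : SmithAlgebra f) (v : V) :
    r • z • v = z • r • v := by
  change r • (z : SmithAlgebra f) • v = (z : SmithAlgebra f) • r • v
  rw [smul_smul, smul_smul, Subalgebra.mem_center_iff.mp z.2 r]

lemma smith_eh_smul (x : V) :
    SmithE f • SmithH f • x = SmithH f • SmithE f • x - SmithE f • x := by
  rw [smul_smul, smith_eh, mul_smul, sub_smul, one_smul]

variable [Module ℂ V] [IsScalarTower ℂ (SmithAlgebra f) V]

lemma complex_smul_comm (a : ℂ) (r : SmithAlgebra f) (v : V) : r • a • v = a • r • v := by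
  rw [← algebraMap_smul (SmithAlgebra f) a v, ← algebraMap_smul (SmithAlgebra f) a (r • v),
    smul_smul, smul_smul, Algebra.commutes]

lemma center_complex_smul_comm (z : Subalgebra.center ℂ (SmithAlgebra f)) (a : ℂ) (v : V) :
    z • a • v = a • z • v :=
  complex_smul_comm a (z : SmithAlgebra f) v

variable (f) in
/-- The vectors `b_j = binom(-H, j) w`, given by the recursion
`(j + 1) b_{j+1} = -(H + j) b_j`. -/
noncomputable def whittakerSeq (w : V) : ℕ → V
  | 0 => w
  | j + 1 => (-(j + 1 : ℂ)⁻¹) • (SmithH f • whittakerSeq w j + (j : ℂ) • whittakerSeq w j)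

lemma smith_h_whittakerSeq (w : V) (j : ℕ) :
    SmithH f • whittakerSeq f w j =
      (-(j + 1 : ℂ)) • whittakerSeq f w (j + 1) + (-(j : ℂ)) • whittakerSeq f w j := by
  have hn : (j + 1 : ℂ) ≠ 0 := Nat.cast_add_one_ne_zero j
  rw [whittakerSeq, smul_smul, neg_mul_neg, mul_inv_cancel₀ hn, one_smul]
  generalize SmithH f • whittakerSeq f w j = y
  module

/-- The operator `c⁻¹E - 1` sends `b_{j+1}` to `b_j`. -/
lemma smith_e_whittakerSeq_succ {c : ℂ} {w : V} (hw : SmithE f • w = c • w) (j : ℕ) :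
    SmithE f • whittakerSeq f w (j + 1) =
      c • (whittakerSeq f w (j + 1) + whittakerSeq f w j) := by
  induction j with
  | zero =>
    simp only [whittakerSeq]
    rw [complex_smul_comm, smul_add, complex_smul_comm, smith_eh_smul, hw, complex_smul_comm]
    generalize SmithH f • w = y
    push_cast
    module
  | succ j ih =>
    have hn : (((j + 1 : ℕ) : ℂ) + 1) ≠ 0 := Nat.cast_add_one_ne_zero (j + 1)
    rw [whittakerSeq, complex_smul_comm, smul_add, complex_smul_comm, smith_eh_smul, ih,
      complex_smul_comm, smul_add (SmithH f), smith_h_whittakerSeq, smith_h_whittakerSeq]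
    generalize whittakerSeq f w (j + 1 + 1) = b₂
    generalize whittakerSeq f w (j + 1) = b₁
    generalize whittakerSeq f w j = b₀
    push_cast at hn ⊢
    match_scalars <;> field_simp <;> ring

/-- A Whittaker module is spanned over the center by the `b_j`: their span is stable under `E`
by the shift formula, under `H` by the recursion, and under `F` because `F w` is a multiple of
`(Ω - g(H)) w`, where `Ω = FE + g(H)` is central. -/
lemma span_whittakerSeq {c : ℂ} (hc : c ≠ 0) {w : V} (hw : SmithE f • w = c • w)
    (r : SmithAlgebra f) :
    r • w ∈ Submodule.span (Subalgebra.center ℂ (SmithAlgebra f))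
      (Set.range (whittakerSeq f w)) := by
  set S := Submodule.span (Subalgebra.center ℂ (SmithAlgebra f)) (Set.range (whittakerSeq f w))
  have hb (j : ℕ) : whittakerSeq f w j ∈ S := Submodule.subset_span ⟨j, rfl⟩
  have stable (r : SmithAlgebra f) (h : ∀ j, r • whittakerSeq f w j ∈ S) :
      ∀ v ∈ S, r • v ∈ S := by
    intro v hv
    induction hv using Submodule.span_induction with
    | mem x hx => obtain ⟨j, rfl⟩ := hx; exact h j
    | zero => rw [smul_zero]; exact S.zero_mem
    | add x y _ _ hx hy => rw [smul_add]; exact S.add_mem hx hy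
    | smul z x _ hx => rw [center_smul_comm]; exact S.smul_mem z hx
  have hscal (a : ℂ) (v : V) (hv : v ∈ S) : a • v ∈ S := by
    rw [← algebraMap_smul (SmithAlgebra f) a v]
    exact S.smul_mem (algebraMap ℂ (Subalgebra.center ℂ (SmithAlgebra f)) a) hv
  have hE : ∀ v ∈ S, SmithE f • v ∈ S := by
    refine stable _ ?_
    rintro (_ | j)
    · rw [whittakerSeq, hw]
      exact hscal _ _ (hb 0)
    · rw [smith_e_whittakerSeq_succ hw]
      exact hscal _ _ (S.add_mem (hb _) (hb _))
  have hH : ∀ v ∈ S, SmithH f • v ∈ S := by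
    refine stable _ fun j => ?_
    rw [smith_h_whittakerSeq]
    exact S.add_mem (hscal _ _ (hb _)) (hscal _ _ (hb _))
  have hHp (g : ℂ[X]) : ∀ v ∈ S, aeval (SmithH f) g • v ∈ S := by
    induction g using Polynomial.induction_on with
    | C a => intro v hv; rw [aeval_C, algebraMap_smul]; exact hscal a v hv
    | add p q hp hq =>
      intro v hv
      rw [map_add, add_smul]
      exact S.add_mem (hp v hv) (hq v hv)
    | monomial n a ih =>
      intro v hv
      rw [pow_succ, ← mul_assoc, map_mul, aeval_X, mul_smul]
      exact ih _ (hH v hv)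
  have hF : ∀ v ∈ S, SmithF f • v ∈ S := by
    refine stable _ fun j => ?_
    induction j with
    | zero =>
      -- With `Ω = FE + g(H)`: `c F w = F E w = (Ω - g(H)) w`, and both terms on the right lie in `S`.
      obtain ⟨g, hg⟩ := exists_antidifference f
      have hz : (SmithF f * SmithE f + aeval (SmithH f) g) • w ∈ S :=
        S.smul_mem (⟨_, smith_casimir_mem_center hg⟩ : Subalgebra.center ℂ (SmithAlgebra f)) (hb 0)
      rw [add_smul, mul_smul, hw, complex_smul_comm] at hz
      have h1 : c • SmithF f • w ∈ S := by
        have h3 := S.add_mem hz (hscal (-1) _ (hHp g w (hb 0)))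
        rwa [neg_one_smul, add_neg_cancel_right] at h3
      have h2 := hscal c⁻¹ _ h1
      rwa [inv_smul_smul₀ hc] at h2
    | succ j ih =>
      rw [whittakerSeq, complex_smul_comm, smul_add, complex_smul_comm, smul_smul, smith_fh,
        mul_smul, add_smul, one_smul]
      exact hscal _ _ (S.add_mem (S.add_mem (hH _ ih) ih) (hscal _ _ ih))
  suffices h : ∀ v ∈ S, r • v ∈ S from h w (hb 0)
  induction r using smith_induction with
  | hE => exact hE
  | hF => exact hF
  | hH => exact hH
  | hc a => intro v hv; rw [algebraMap_smul]; exact hscal a v hv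
  | hadd x y hx hy =>
    intro v hv
    rw [add_smul]
    exact S.add_mem (hx v hv) (hy v hv)
  | hmul x y hx hy =>
    intro v hv
    rw [mul_smul]
    exact hx _ (hy v hv)

end Whittaker

/-- For a Whittaker module `V = R·w`, the natural map `Z(R) → End_{R(f)}(V)` is surjective
with kernel `Z_V = Ann_{Z(R)}(V)`, so `End_{R(f)}(V) ≅ Z(R)/Z_V`; in particular
`End_{R(f)}(V)` is commutative. -/
theorem smith_endomorphisms_of_whittaker (f : ℂ[X]) (c : ℂ) (hc : c ≠ 0)
    (V : Type) [AddCommGroup V] [Module (SmithAlgebra f) V] (w : V)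
    (hw : SmithE f • w = algebraMap ℂ (SmithAlgebra f) c • w)
    (hcyc : ∀ v : V, ∃ r : SmithAlgebra f, v = r • w) :
    Function.Surjective (smithCentralAction f V) ∧
    (∀ z : Subalgebra.center ℂ (SmithAlgebra f),
        smithCentralAction f V z = 0 ↔ ∀ v : V, (z : SmithAlgebra f) • v = 0) ∧
    ∀ α β : Module.End (SmithAlgebra f) V, α * β = β * α := by
  -- `V` carries the `ℂ`-structure induced from `R(f)`.
  let _ : Module ℂ V := Module.compHom V (algebraMap ℂ (SmithAlgebra f))
  have : IsScalarTower ℂ (SmithAlgebra f) V := IsScalarTower.of_algebraMap_smul fun _ _ => rfl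
  replace hw : SmithE f • w = c • w := hw
  have hsurj : Function.Surjective (smithCentralAction f V) := by
    intro α
    let N : V →ₗ[Subalgebra.center ℂ (SmithAlgebra f)] V :=
      { toFun := fun v => c⁻¹ • SmithE f • v - v
        map_add' := fun x y => by rw [smul_add, smul_add]; abel
        map_smul' := fun z x => by
          rw [RingHom.id_apply, center_smul_comm, ← center_complex_smul_comm, smul_sub] }
    have hN (v : V) : N v = c⁻¹ • SmithE f • v - v := rfl
    have hα : SmithE f • α w = c • α w := by
      rw [← map_smul, hw, ← algebraMap_smul (SmithAlgebra f) c w, map_smul, algebraMap_smul]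
    have hspan : α w ∈ Submodule.span (Subalgebra.center ℂ (SmithAlgebra f))
        (Set.range (whittakerSeq f w)) := by
      obtain ⟨r, hr⟩ := hcyc (α w)
      rw [hr]
      exact span_whittakerSeq hc hw r
    obtain ⟨z, hz⟩ := exists_smul_of_shift_eq_zero (N := N) (b := whittakerSeq f w)
      (by rw [hN, whittakerSeq, hw, inv_smul_smul₀ hc, sub_self])
      (fun j => by
        rw [hN, smith_e_whittakerSeq_succ hw, inv_smul_smul₀ hc, add_sub_cancel_left])
      (fun z hz v => by
        obtain ⟨r, rfl⟩ := hcyc v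
        rw [whittakerSeq] at hz
        rw [← center_smul_comm, hz, smul_zero])
      hspan (by rw [hN, hα, inv_smul_smul₀ hc, sub_self])
    refine ⟨z, LinearMap.ext fun v => ?_⟩
    obtain ⟨r, rfl⟩ := hcyc v
    rw [map_smul α, hz, center_smul_comm]
    rfl
  refine ⟨hsurj, fun z => LinearMap.ext_iff, fun α β => ?_⟩
  obtain ⟨a, rfl⟩ := hsurj α
  obtain ⟨b, rfl⟩ := hsurj β
  rw [← map_mul, ← map_mul]
  exact congrArg _ (Subtype.ext (Subalgebra.mem_center_iff.mp b.2 a))
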